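/- Weak positivity of the high-order conservative multidimensional scheme (Theorem 4.4, one cell, one forward-Euler step): Let d = 2, N ≥ 1, |K| > 0, edge lengths ℓ₁,…,ℓ_N > 0 with perimeter |∂K| = Σⱼ ℓⱼ, unit outward normals ξ⁽¹⁾,…,ξ⁽ᴺ⁾ ∈ ℝ² with Σⱼ ℓⱼ ξ⁽ʲ⁾ = 0, and Q ≥ 1 edge-quadrature weights ω₁,…,ω_Q > 0 with Σ_q ω_q = 1. For each (j, q) let U_{jq}^{int}, U_{jq}^{ext} ∈ 𝒢, and suppose the cell average decomposes with positive weights as Ū = Σ_{q=1}^{Q̃} ϖ̃_q Ũ_q + Σ_{j=1}^{N} Σ_{q=1}^{Q} ϖ_{jq} U_{jq}^{int}, where Ũ_q ∈ 𝒢, ϖ̃_q > 0, ϖ_{jq} > 0, Σ_q ϖ̃_q + Σ_{j,q} ϖ_{jq} = 1. For each (j, q) let wave speeds satisfy σ_{jq}^{r} ≥ α_r(U_{jq}^{ext}, U_{jq}^{int}; ξ⁽ʲ⁾) and σ_{jq}^{l} ≤ α_l(U_{jq}^{int}, U_{jq}^{ext}; ξ⁽ʲ⁾), with σ_{jq}^{±}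 the clamped speeds. Define α̂_{jq} = max{ ⟨ξ⁽ʲ⁾, v_{jq}^{int}⟩ , |∂K|⁻¹ Σ_{i=1}^{N} ℓᵢ ⟨ξ⁽ʲ⁾ − ξ⁽ⁱ⁾, (√ρ_{jq}^{int} v_{jq}^{int} + √ρ_{iq}^{int} v_{iq}^{int})/(√ρ_{jq}^{int} + √ρ_{iq}^{int})⟩ } + 𝒞(U_{jq}^{int}; ξ⁽ʲ⁾) + 2|∂K|⁻¹ Σ_{i=1}^{N} ℓᵢ |B_{jq}^{int} − B_{iq}^{int}|/(√ρ_{jq}^{int} + √ρ_{iq}^{int}). Let Δt > 0 satisfy Δt·(ℓⱼ/|K|)·(α̂_{jq} − σ_{jq}^{−}) < ϖ_{jq}/ω_q for all j, q, and set Ū' = (ρ̄', m̄', B̄', Ē') = Ū − (Δt/|K|) Σ_{j,q} ℓⱼ ω_q F̂(U_{jq}^{int}, U_{jq}^{ext}; ξ⁽ʲ⁾). Then ρ̄' > 0 and 𝓔(Ū') > −Δt·(ρ̄')⁻¹·(m̄'·B̄')·div, where div = |K|⁻¹ Σ_{j,q} ℓⱼ ω_q ⟨ξ⁽ʲ⁾,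 (σ_{jq}^{+} B_{jq}^{int} − σ_{jq}^{−} B_{jq}^{ext})/(σ_{jq}^{+} − σ_{jq}^{−})⟩. In particular, if div = 0 then Ū' ∈ 𝒢. -/

import Mathlib

noncomputable section

open Finset

/-- An MHD state `U = (ρ, m, B, E)` viewed as a vector in `ℝ⁸`. -/
abbrev MHDState := Fin 8 → ℝ

namespace MHD

/-- Build a state from density, momentum, magnetic field, total energy. -/
def mk (ρ : ℝ) (m B : Fin 3 → ℝ) (E : ℝ) : MHDState :=
  ![ρ, m 0, m 1, m 2, B 0, B 1, B 2, E]

/-- Density component. -/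
def dens (U : MHDState) : ℝ := U 0

/-- Momentum components. -/
def mom (U : MHDState) : Fin 3 → ℝ := ![U 1, U 2, U 3]

/-- Magnetic field components. -/
def magB (U : MHDState) : Fin 3 → ℝ := ![U 4, U 5, U 6]

/-- Total energy component. -/
def toten (U : MHDState) : ℝ := U 7

/-- Euclidean dot product on `ℝ³`. -/
def dot3 (a b : Fin 3 → ℝ) : ℝ := ∑ k, a k * b k

/-- Squared Euclidean norm on `ℝ³`. -/
def sq3 (a : Fin 3 → ℝ) : ℝ := dot3 a a

/-- Euclidean norm on `ℝ³`. -/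
def norm3 (a : Fin 3 → ℝ) : ℝ := Real.sqrt (sq3 a)

/-- Velocity `v = m / ρ`. -/
def vel (U : MHDState) : Fin 3 → ℝ := fun k => mom U k / dens U

/-- Internal energy `𝓔(U) = E − (|m|²/ρ + |B|²)/2`. -/
def intE (U : MHDState) : ℝ := toten U - (sq3 (mom U) / dens U + sq3 (magB U)) / 2

/-- Specific internal energy `e = 𝓔(U)/ρ`. -/
def specE (U : MHDState) : ℝ := intE U / dens U

/-- The admissible state set `𝒢`. -/
def Gset : Set MHDState := {U | 0 < dens U ∧ 0 < intE U}

/-- The set `𝒢_ρ` of states with positive density. -/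
def Grho : Set MHDState := {U | 0 < dens U}

/-- Euclidean dot product on `ℝ⁸`. -/
def dot8 (U V : MHDState) : ℝ := ∑ i, U i * V i

/-- The vector `n* = (|v*|²/2, −v*, −B*, 1)`. -/
def nstar (vs Bs : Fin 3 → ℝ) : MHDState :=
  mk (sq3 vs / 2) (fun k => -vs k) (fun k => -Bs k) 1

/-- The set `𝒢*`. -/
def GstarSet : Set MHDState :=
  {U | 0 < dens U ∧ ∀ vs Bs : Fin 3 → ℝ, 0 < dot8 U (nstar vs Bs) + sq3 Bs / 2}

/-- Equation of state assumption: for `ρ > 0`, `e > 0 ↔ p(ρ,e) > 0`. -/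
def IsEOS (pfun : ℝ → ℝ → ℝ) : Prop :=
  ∀ ρ e : ℝ, 0 < ρ → (0 < e ↔ 0 < pfun ρ e)

/-- Pressure of a state, via the equation of state. -/
def pres (pfun : ℝ → ℝ → ℝ) (U : MHDState) : ℝ := pfun (dens U) (specE U)

/-- Total pressure `p + |B|²/2`. -/
def ptot (pfun : ℝ → ℝ → ℝ) (U : MHDState) : ℝ := pres pfun U + sq3 (magB U) / 2

/-- The `i`-th flux `F_i(U)`. -/
def flux (pfun : ℝ → ℝ → ℝ) (i : Fin 3) (U : MHDState) : MHDState :=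
  mk (dens U * vel U i)
    (fun k => dens U * vel U i * vel U k - magB U i * magB U k
      + ptot pfun U * (if k = i then 1 else 0))
    (fun k => vel U i * magB U k - magB U i * vel U k)
    (vel U i * (toten U + ptot pfun U) - magB U i * dot3 (vel U) (magB U))

/-- Directional inner product `⟨ξ, w⟩ = Σ_{k<d} ξ_k w_k` for `ξ ∈ ℝ^d`, `w ∈ ℝ³`, `d ≤ 3`. -/
def dirDot {d : ℕ} (hd : d ≤ 3) (ξ : Fin d → ℝ) (w : Fin 3 → ℝ) : ℝ :=
  ∑ k, ξ k * w (Fin.castLE hd k)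

/-- Directional flux `⟨ξ, F(U)⟩ = Σ_{i<d} ξ_i F_i(U)`. -/
def dirFlux (pfun : ℝ → ℝ → ℝ) {d : ℕ} (hd : d ≤ 3) (ξ : Fin d → ℝ) (U : MHDState) :
    MHDState :=
  ∑ i, ξ i • flux pfun (Fin.castLE hd i) U

/-- `ξ` is a unit vector. -/
def unitVec {d : ℕ} (ξ : Fin d → ℝ) : Prop := (∑ k, (ξ k) ^ 2) = 1

/-- `𝒞_s(U) = p / (ρ √(2e))`. -/
def soundC (pfun : ℝ → ℝ → ℝ) (U : MHDState) : ℝ :=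
  pres pfun U / (dens U * Real.sqrt (2 * specE U))

/-- `𝒞(U; ξ)`. -/
def waveC (pfun : ℝ → ℝ → ℝ) {d : ℕ} (hd : d ≤ 3) (ξ : Fin d → ℝ) (U : MHDState) : ℝ :=
  Real.sqrt ((soundC pfun U ^ 2 + sq3 (magB U) / dens U
    + Real.sqrt ((soundC pfun U ^ 2 + sq3 (magB U) / dens U) ^ 2
      - 4 * soundC pfun U ^ 2 * dirDot hd ξ (magB U) ^ 2 / dens U)) / 2)

/-- Roe-type averaged velocity `v̄ = (√ρ v + √ρ̃ ṽ)/(√ρ + √ρ̃)`. -/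
def roeV (U Ut : MHDState) : Fin 3 → ℝ := fun k =>
  (Real.sqrt (dens U) * vel U k + Real.sqrt (dens Ut) * vel Ut k)
    / (Real.sqrt (dens U) + Real.sqrt (dens Ut))

/-- `α_r(U, Ũ; ξ)`. -/
def alphaR (pfun : ℝ → ℝ → ℝ) {d : ℕ} (hd : d ≤ 3) (ξ : Fin d → ℝ) (U Ut : MHDState) : ℝ :=
  max (dirDot hd ξ (vel U)) (dirDot hd ξ (roeV U Ut)) + waveC pfun hd ξ U
    + norm3 (magB U - magB Ut) / (Real.sqrt (dens U) + Real.sqrt (dens Ut))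

/-- `α_l(U, Ũ; ξ)`. -/
def alphaL (pfun : ℝ → ℝ → ℝ) {d : ℕ} (hd : d ≤ 3) (ξ : Fin d → ℝ) (U Ut : MHDState) : ℝ :=
  min (dirDot hd ξ (vel U)) (dirDot hd ξ (roeV U Ut)) - waveC pfun hd ξ U
    - norm3 (magB U - magB Ut) / (Real.sqrt (dens U) + Real.sqrt (dens Ut))

/-- `α_⋆(U, Ũ; ξ)`. -/
def alphaS (pfun : ℝ → ℝ → ℝ) {d : ℕ} (hd : d ≤ 3) (ξ : Fin d → ℝ) (U Ut : MHDState) : ℝ :=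
  max (|dirDot hd ξ (vel U)|) (|dirDot hd ξ (roeV U Ut)|) + waveC pfun hd ξ U
    + norm3 (magB U - magB Ut) / (Real.sqrt (dens U) + Real.sqrt (dens Ut))

/-- The vector `θ(U, v*, B*) = 2^{−1/2}(B − B*, √ρ(v − v*), √(2ρe)) ∈ ℝ⁷`. -/
def theta (U : MHDState) (vs Bs : Fin 3 → ℝ) : Fin 7 → ℝ :=
  ![(magB U 0 - Bs 0) / Real.sqrt 2,
    (magB U 1 - Bs 1) / Real.sqrt 2,
    (magB U 2 - Bs 2) / Real.sqrt 2,
    Real.sqrt (dens U) * (vel U 0 - vs 0) / Real.sqrt 2,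
    Real.sqrt (dens U) * (vel U 1 - vs 1) / Real.sqrt 2,
    Real.sqrt (dens U) * (vel U 2 - vs 2) / Real.sqrt 2,
    Real.sqrt (2 * intE U) / Real.sqrt 2]

/-- `|θ|²`. -/
def thetaSq (U : MHDState) (vs Bs : Fin 3 → ℝ) : ℝ := ∑ k, theta U vs Bs k ^ 2

/-- Godunov–Powell source vector `S(U) = (0, B, v, v·B)`. -/
def source (U : MHDState) : MHDState := mk 0 (magB U) (vel U) (dot3 (vel U) (magB U))

/-- HLL numerical flux with clamped wave speeds `σm ≤ 0 ≤ σp`. -/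
def hllFlux (pfun : ℝ → ℝ → ℝ) {d : ℕ} (hd : d ≤ 3) (ξ : Fin d → ℝ)
    (Um Up : MHDState) (σm σp : ℝ) : MHDState :=
  (σp - σm)⁻¹ • (σp • dirFlux pfun hd ξ Um - σm • dirFlux pfun hd ξ Up
    + (σm * σp) • (Up - Um))

/-- HLL intermediate state `H(U⁻, U⁺; ξ)`. -/
def hllMid (pfun : ℝ → ℝ → ℝ) {d : ℕ} (hd : d ≤ 3) (ξ : Fin d → ℝ)
    (Um Up : MHDState) (σm σp : ℝ) : MHDState :=
  (σp - σm)⁻¹ • (σp • Up - dirFlux pfun hd ξ Up - σm • Um + dirFlux pfun hd ξ Um)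

/-- The quantity `α̂_j` of Theorem 2.3. -/
def alphaHat (pfun : ℝ → ℝ → ℝ) {d : ℕ} (hd : d ≤ 3) {N : ℕ}
    (s : Fin N → ℝ) (ξ : Fin N → Fin d → ℝ) (U : Fin N → MHDState) (j : Fin N) : ℝ :=
  max (dirDot hd (ξ j) (vel (U j)))
      ((∑ i, s i)⁻¹ * ∑ i, s i * dirDot hd (fun k => ξ j k - ξ i k) (roeV (U j) (U i)))
  + waveC pfun hd (ξ j) (U j)
  + 2 * (∑ i, s i)⁻¹ * ∑ i, s i *
      (norm3 (magB (U j) - magB (U i)) / (Real.sqrt (dens (U j)) + Real.sqrt (dens (U i))))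

def d1le3 : (1 : ℕ) ≤ 3 := by omega
def d2le3 : (2 : ℕ) ≤ 3 := by omega

/-- In one dimension the direction `ξ = 1`. -/
def xi1 : Fin 1 → ℝ := fun _ => 1

/-! For a state with positive density, `U · n* + |B*|²/2 = ρ|v − v*|²/2 + |B − B*|²/2 + 𝓔(U)`
with `n* = (|v*|²/2, −v*, −B*, 1)`, so the internal energy is the value at `v* = v`, `B* = B` of a
functional that is affine in `U`, and on `𝒢` this functional equals `|θ|² > 0`. The same
functional is bounded on fluxes: the pressure and magnetic tension contribute at most
`𝒞(U; ξ) |θ|²`, and what is left is transport of `|θ|²`, with `v` for the fluid part and with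
`v*` for the magnetic part. Trading `v*` for a Roe average costs the jump term in the wave
speeds.

Writing the HLL flux as `⟨ξ, F(U⁻)⟩ + σ⁻ (H − U⁻)`, the choice of speeds bounds the functional of
the intermediate state `H` from below by a multiple of the jump of `⟨ξ, B⟩`. On a closed boundary,
`∑ ℓⱼ ξ⁽ʲ⁾ = 0` allows the magnetic transport to be symmetrized over pairs of edges, which is
where `α̂` comes from. The magnetic jumps add up to the discrete divergence, and under the Courant
condition the remainder of the update is a positive combination of values of `|θ|²`. -/

/-- The direction `ξ ∈ ℝ^d` extended by zero to a vector of `ℝ³`. -/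
def dirVec {d : ℕ} (ξ : Fin d → ℝ) : Fin 3 → ℝ :=
  fun k => if h : (k : ℕ) < d then ξ ⟨k, h⟩ else 0

/-- The Alfvén velocity `B / √ρ`. -/
def alfvenV (U : MHDState) : Fin 3 → ℝ := fun k => magB U k / √(dens U)

/-- The kinetic and internal part `ρ|v − v*|²/2 + 𝓔` of `|θ(U, v*, B*)|²`. -/
def fluidPart (U : MHDState) (vs : Fin 3 → ℝ) : ℝ := dens U * sq3 (vel U - vs) / 2 + intE U

/-- The magnetic part `|B − B*|²/2` of `|θ(U, v*, B*)|²`. -/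
def magPart (U : MHDState) (Bs : Fin 3 → ℝ) : ℝ := sq3 (magB U - Bs) / 2

/-- The part of `⟨ξ, F(U)⟩ · n*` carried by waves: the pressure and the magnetic tension seen in
the frame of `v*` and `B*`. -/
def waveForm (pfun : ℝ → ℝ → ℝ) {d : ℕ} (hd : d ≤ 3) (ξ : Fin d → ℝ) (U : MHDState)
    (vs Bs : Fin 3 → ℝ) : ℝ :=
  dirDot hd ξ (vel U - vs) * (pres pfun U + dot3 (magB U) (magB U - Bs))
    - dirDot hd ξ (magB U) * dot3 (vel U - vs) (magB U - Bs)

/-- The contribution `|B − B̃| / (√ρ + √ρ̃)` of the magnetic jump to the wave speeds. -/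
def jumpB (U Ut : MHDState) : ℝ := norm3 (magB U - magB Ut) / (√(dens U) + √(dens Ut))

/-- The magnetic field `(σ⁺ B⁻ − σ⁻ B⁺) / (σ⁺ − σ⁻)` whose normal component enters the discrete
divergence. -/
def hllMagB (Um Up : MHDState) (σm σp : ℝ) : Fin 3 → ℝ :=
  fun k => (σp * magB Um k - σm * magB Up k) / (σp - σm)

section Vectors

lemma dot3_eq (a b : Fin 3 → ℝ) : dot3 a b = a 0 * b 0 + a 1 * b 1 + a 2 * b 2 :=
  Fin.sum_univ_three _

lemma sq3_eq (a : Fin 3 → ℝ) : sq3 a = a 0 ^ 2 + a 1 ^ 2 + a 2 ^ 2 := by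
  simp only [sq3, dot3_eq, sq]

lemma sq3_nonneg (a : Fin 3 → ℝ) : 0 ≤ sq3 a := by
  rw [sq3_eq]; positivity

lemma norm3_nonneg (a : Fin 3 → ℝ) : 0 ≤ norm3 a := Real.sqrt_nonneg _

lemma norm3_sq (a : Fin 3 → ℝ) : norm3 a ^ 2 = sq3 a := Real.sq_sqrt (sq3_nonneg a)

lemma norm3_sub_comm (a b : Fin 3 → ℝ) : norm3 (a - b) = norm3 (b - a) := by
  simp only [norm3, sq3_eq, Pi.sub_apply]
  ring_nf

lemma mul_add_dot3_sq_le (s t : ℝ) (a b : Fin 3 → ℝ) :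
    (s * t + dot3 a b) ^ 2 ≤ (s ^ 2 + sq3 a) * (t ^ 2 + sq3 b) := by
  have h := Finset.sum_mul_sq_le_sq_mul_sq Finset.univ ![s, a 0, a 1, a 2] ![t, b 0, b 1, b 2]
  simpa [Fin.sum_univ_four, dot3_eq, sq3_eq, add_assoc] using h

lemma dot3_sq_le (a b : Fin 3 → ℝ) : dot3 a b ^ 2 ≤ sq3 a * sq3 b := by
  simpa using mul_add_dot3_sq_le 0 0 a b

lemma abs_dot3_le (a b : Fin 3 → ℝ) : |dot3 a b| ≤ norm3 a * norm3 b := by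
  refine abs_le_of_sq_le_sq ?_ (mul_nonneg (norm3_nonneg a) (norm3_nonneg b))
  rw [mul_pow, norm3_sq, norm3_sq]
  exact dot3_sq_le a b

lemma dot8_add (U V W : MHDState) : dot8 (U + V) W = dot8 U W + dot8 V W :=
  add_dotProduct U V W

lemma dot8_sub (U V W : MHDState) : dot8 (U - V) W = dot8 U W - dot8 V W :=
  sub_dotProduct U V W

lemma dot8_neg (U W : MHDState) : dot8 (-U) W = -dot8 U W :=
  neg_dotProduct U W

lemma dot8_smul (c : ℝ) (U W : MHDState) : dot8 (c • U) W = c * dot8 U W :=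
  smul_dotProduct c U W

lemma dot8_sum {ι : Type*} (s : Finset ι) (U : ι → MHDState) (W : MHDState) :
    dot8 (∑ i ∈ s, U i) W = ∑ i ∈ s, dot8 (U i) W :=
  sum_dotProduct s U W

lemma dens_eq_dot8 (U : MHDState) : dens U = dot8 U (Pi.single 0 1) :=
  (dotProduct_single_one U 0).symm

end Vectors

section Directions

variable {d : ℕ} {hd : d ≤ 3} {ξ : Fin d → ℝ}

lemma dirDot_eq_dot3 (ξ : Fin d → ℝ) (w : Fin 3 → ℝ) : dirDot hd ξ w = dot3 (dirVec ξ) w := by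
  rw [dot3_eq]
  interval_cases d <;> simp [dirDot, dirVec, Fin.sum_univ_succ, add_assoc]

lemma sq3_dirVec (hd : d ≤ 3) (ξ : Fin d → ℝ) : sq3 (dirVec ξ) = ∑ k, ξ k ^ 2 := by
  rw [sq3, ← dirDot_eq_dot3 (hd := hd)]
  simp [dirDot, dirVec, sq]

lemma dirDot_sub_left (ξ η : Fin d → ℝ) (w : Fin 3 → ℝ) :
    dirDot hd (ξ - η) w = dirDot hd ξ w - dirDot hd η w :=
  sub_dotProduct ξ η _

lemma dirDot_neg_left (ξ : Fin d → ℝ) (w : Fin 3 → ℝ) : dirDot hd (-ξ) w = -dirDot hd ξ w :=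
  neg_dotProduct ξ _

lemma dirDot_smul_right (ξ : Fin d → ℝ) (c : ℝ) (w : Fin 3 → ℝ) :
    dirDot hd ξ (c • w) = c * dirDot hd ξ w :=
  dotProduct_smul c ξ _

lemma unitVec_neg (hξ : unitVec ξ) : unitVec (-ξ) := by
  simpa [unitVec] using hξ

lemma abs_dirDot_le {κ : ℝ} (hκ : 0 ≤ κ) (hξ : ∑ k, ξ k ^ 2 ≤ κ ^ 2) (w : Fin 3 → ℝ) :
    |dirDot hd ξ w| ≤ κ * norm3 w := by
  rw [dirDot_eq_dot3]
  refine (abs_dot3_le _ w).trans (mul_le_mul_of_nonneg_right ?_ (norm3_nonneg w))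
  rw [norm3, sq3_dirVec hd]
  exact Real.sqrt_le_iff.2 ⟨hκ, hξ⟩

lemma dirDot_sq_le (hξ : unitVec ξ) (w : Fin 3 → ℝ) : dirDot hd ξ w ^ 2 ≤ sq3 w := by
  have h := dot3_sq_le (dirVec ξ) w
  rwa [sq3_dirVec hd, hξ, one_mul, ← dirDot_eq_dot3 (hd := hd)] at h

/- Cauchy–Schwarz for the components of `β` and `w` orthogonal to `ξ`. -/
lemma dot3_sub_dirDot_mul_dirDot_sq_le (hξ : unitVec ξ) (β w : Fin 3 → ℝ) :
    (dot3 β w - dirDot hd ξ β * dirDot hd ξ w) ^ 2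
      ≤ (sq3 β - dirDot hd ξ β ^ 2) * (sq3 w - dirDot hd ξ w ^ 2) := by
  have hunit : sq3 (dirVec ξ) = 1 := (sq3_dirVec hd ξ).trans hξ
  have hperp : ∀ x y : Fin 3 → ℝ,
      dot3 (x - dirDot hd ξ x • dirVec ξ) (y - dirDot hd ξ y • dirVec ξ)
        = dot3 x y - dirDot hd ξ x * dirDot hd ξ y := by
    intro x y
    simp only [dirDot_eq_dot3, dot3_eq, sq3_eq, Pi.sub_apply, Pi.smul_apply, smul_eq_mul]
      at hunit ⊢
    linear_combination (dirVec ξ 0 * x 0 + dirVec ξ 1 * x 1 + dirVec ξ 2 * x 2)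
      * (dirVec ξ 0 * y 0 + dirVec ξ 1 * y 1 + dirVec ξ 2 * y 2) * hunit
  have h := dot3_sq_le (β - dirDot hd ξ β • dirVec ξ) (w - dirDot hd ξ w • dirVec ξ)
  simpa only [sq3, hperp, ← sq] using h

lemma sum_sub_sq_le_of_unitVec {η : Fin d → ℝ} (hξ : unitVec ξ) (hη : unitVec η) :
    ∑ k, (ξ - η) k ^ 2 ≤ 2 ^ 2 := by
  calc ∑ k, (ξ - η) k ^ 2 ≤ ∑ k, 2 * (ξ k ^ 2 + η k ^ 2) :=
        Finset.sum_le_sum fun k _ => by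
          rw [Pi.sub_apply]; nlinarith [sq_nonneg (ξ k + η k)]
    _ = 2 ^ 2 := by
        rw [← Finset.mul_sum, Finset.sum_add_distrib, hξ, hη]; norm_num

lemma sum_mul_dirDot_eq_zero {ι : Type*} [Fintype ι] {s : ι → ℝ} {ξ : ι → Fin d → ℝ}
    (hs : ∑ j, s j • ξ j = 0) (w : Fin 3 → ℝ) : ∑ j, s j * dirDot hd (ξ j) w = 0 := by
  calc ∑ j, s j * dirDot hd (ξ j) w = dirDot hd (∑ j, s j • ξ j) w := by
        simp only [dirDot, Finset.sum_apply, Pi.smul_apply, smul_eq_mul, Finset.mul_sum,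
          Finset.sum_mul, mul_assoc]
        exact Finset.sum_comm
    _ = 0 := by rw [hs]; simp [dirDot]

end Directions

section TestFunctional

variable {U Ut : MHDState}

lemma sqrt_dens_pos (hU : U ∈ Gset) : 0 < √(dens U) := Real.sqrt_pos.2 hU.1

lemma mom_eq_dens_smul_vel (hU : dens U ≠ 0) : mom U = dens U • vel U := by
  funext k
  simp only [vel, Pi.smul_apply, smul_eq_mul]
  field_simp

lemma dot3_vel (U : MHDState) (w : Fin 3 → ℝ) :
    dot3 (vel U) w = (dens U)⁻¹ * dot3 (mom U) w := by
  simp only [dot3_eq, vel]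
  ring

lemma toten_eq (hU : dens U ≠ 0) :
    toten U = intE U + (dens U * sq3 (vel U) + sq3 (magB U)) / 2 := by
  have h : sq3 (mom U) / dens U = dens U * sq3 (vel U) := by
    simp only [mom_eq_dens_smul_vel hU, sq3_eq, Pi.smul_apply, smul_eq_mul]
    field_simp
  rw [intE, h]; ring

lemma dot8_nstar (U : MHDState) (vs Bs : Fin 3 → ℝ) :
    dot8 U (nstar vs Bs)
      = dens U * (sq3 vs / 2) - dot3 (mom U) vs - dot3 (magB U) Bs + toten U := by
  simp only [dot8, Fin.sum_univ_eight, nstar, mk, dens, mom, magB, toten, dot3_eq,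
    Matrix.cons_val]
  ring

lemma dot8_nstar_add_eq_fluidPart_add_magPart (hU : dens U ≠ 0) (vs Bs : Fin 3 → ℝ) :
    dot8 U (nstar vs Bs) + sq3 Bs / 2 = fluidPart U vs + magPart U Bs := by
  simp only [dot8_nstar, toten_eq hU, mom_eq_dens_smul_vel hU, fluidPart, magPart, dot3_eq,
    sq3_eq, Pi.sub_apply, Pi.smul_apply, smul_eq_mul]
  ring

lemma thetaSq_eq (hU : U ∈ Gset) (vs Bs : Fin 3 → ℝ) :
    thetaSq U vs Bs = fluidPart U vs + magPart U Bs := by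
  simp only [thetaSq, theta, Fin.sum_univ_seven, Matrix.cons_val, fluidPart, magPart, sq3_eq,
    Pi.sub_apply, div_pow, mul_pow, Real.sq_sqrt hU.1.le, Real.sq_sqrt zero_le_two,
    Real.sq_sqrt (mul_nonneg zero_le_two hU.2.le)]
  ring

lemma dot8_nstar_add_eq_thetaSq (hU : U ∈ Gset) (vs Bs : Fin 3 → ℝ) :
    dot8 U (nstar vs Bs) + sq3 Bs / 2 = thetaSq U vs Bs := by
  rw [dot8_nstar_add_eq_fluidPart_add_magPart hU.1.ne', thetaSq_eq hU]

lemma dot8_nstar_vel_magB_add (hU : dens U ≠ 0) :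
    dot8 U (nstar (vel U) (magB U)) + sq3 (magB U) / 2 = intE U := by
  rw [dot8_nstar_add_eq_fluidPart_add_magPart hU]
  simp [fluidPart, magPart, sq3_eq]

lemma fluidPart_pos (hU : U ∈ Gset) (vs : Fin 3 → ℝ) : 0 < fluidPart U vs :=
  add_pos_of_nonneg_of_pos (div_nonneg (mul_nonneg hU.1.le (sq3_nonneg _)) zero_le_two) hU.2

lemma magPart_nonneg (U : MHDState) (Bs : Fin 3 → ℝ) : 0 ≤ magPart U Bs :=
  div_nonneg (sq3_nonneg _) zero_le_two

lemma thetaSq_pos (hU : U ∈ Gset) (vs Bs : Fin 3 → ℝ) : 0 < thetaSq U vs Bs := by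
  rw [thetaSq_eq hU]
  exact add_pos_of_pos_of_nonneg (fluidPart_pos hU vs) (magPart_nonneg U Bs)

lemma jumpB_nonneg (U Ut : MHDState) : 0 ≤ jumpB U Ut :=
  div_nonneg (norm3_nonneg _) (add_nonneg (Real.sqrt_nonneg _) (Real.sqrt_nonneg _))

lemma jumpB_comm (U Ut : MHDState) : jumpB U Ut = jumpB Ut U := by
  rw [jumpB, jumpB, norm3_sub_comm, add_comm]

lemma roeV_comm (U Ut : MHDState) : roeV U Ut = roeV Ut U := by
  funext k
  rw [roeV, roeV, add_comm, add_comm √(dens U)]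

end TestFunctional

section FastSpeed

variable {pfun : ℝ → ℝ → ℝ} {d : ℕ} {hd : d ≤ 3} {ξ : Fin d → ℝ} {U : MHDState}

lemma magB_eq_smul_alfvenV (hU : 0 < dens U) : magB U = √(dens U) • alfvenV U := by
  funext k
  exact (mul_div_cancel₀ _ (Real.sqrt_pos.2 hU).ne').symm

lemma sq3_magB_div_dens (hU : 0 < dens U) : sq3 (magB U) / dens U = sq3 (alfvenV U) := by
  simp only [alfvenV, sq3_eq, div_pow, Real.sq_sqrt hU.le]
  ring

lemma dirDot_magB_sq (hU : 0 < dens U) :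
    dirDot hd ξ (magB U) ^ 2 = dens U * dirDot hd ξ (alfvenV U) ^ 2 := by
  rw [magB_eq_smul_alfvenV hU, dirDot_smul_right, mul_pow, Real.sq_sqrt hU.le]

lemma specE_pos (hU : U ∈ Gset) : 0 < specE U := div_pos hU.2 hU.1

lemma soundC_pos (hEOS : IsEOS pfun) (hU : U ∈ Gset) : 0 < soundC pfun U :=
  div_pos ((hEOS _ _ hU.1).1 (specE_pos hU))
    (mul_pos hU.1 (Real.sqrt_pos.2 (mul_pos two_pos (specE_pos hU))))

lemma pres_eq (hU : U ∈ Gset) : pres pfun U = √(dens U) * soundC pfun U * √(2 * intE U) := by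
  have he : 0 < √(2 * specE U) := Real.sqrt_pos.2 (mul_pos two_pos (specE_pos hU))
  have hρ := hU.1
  have hE : 2 * intE U = dens U * (2 * specE U) := by
    rw [specE]; field_simp
  rw [hE, Real.sqrt_mul hρ.le, soundC]
  field_simp
  rw [Real.sq_sqrt hρ.le]

lemma waveC_nonneg (pfun : ℝ → ℝ → ℝ) (ξ : Fin d → ℝ) (U : MHDState) : 0 ≤ waveC pfun hd ξ U :=
  Real.sqrt_nonneg _

lemma waveC_pos (hEOS : IsEOS pfun) (ξ : Fin d → ℝ) (hU : U ∈ Gset) : 0 < waveC pfun hd ξ U := by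
  have hc := soundC_pos hEOS hU
  have hB := div_nonneg (sq3_nonneg (magB U)) hU.1.le
  unfold waveC
  positivity

lemma waveC_neg (pfun : ℝ → ℝ → ℝ) (ξ : Fin d → ℝ) (U : MHDState) :
    waveC pfun hd (-ξ) U = waveC pfun hd ξ U := by
  rw [waveC, waveC, dirDot_neg_left, neg_sq]

/- `𝒞(U; ξ)²` is the larger root of `x² - (𝒞_s² + |β|²) x + 𝒞_s² ⟨ξ, β⟩²`, `β` the Alfvén
velocity. -/
lemma waveC_sq_root (pfun : ℝ → ℝ → ℝ) (hξ : unitVec ξ) (hU : 0 < dens U) :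
    (waveC pfun hd ξ U ^ 2) ^ 2 =
        (soundC pfun U ^ 2 + sq3 (alfvenV U)) * waveC pfun hd ξ U ^ 2
          - soundC pfun U ^ 2 * dirDot hd ξ (alfvenV U) ^ 2 ∧
      soundC pfun U ^ 2 + sq3 (alfvenV U) ≤ 2 * waveC pfun hd ξ U ^ 2 := by
  have hperp := dirDot_sq_le (hd := hd) hξ (alfvenV U)
  have hβ := sq3_nonneg (alfvenV U)
  have hdrop : 4 * soundC pfun U ^ 2 * dirDot hd ξ (magB U) ^ 2 / dens U
      = 4 * soundC pfun U ^ 2 * dirDot hd ξ (alfvenV U) ^ 2 := by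
    rw [dirDot_magB_sq hU]; field_simp
  rw [waveC, hdrop, sq3_magB_div_dens hU]
  set c := soundC pfun U
  set S := c ^ 2 + sq3 (alfvenV U) with hS
  have hdisc : 0 ≤ S ^ 2 - 4 * c ^ 2 * dirDot hd ξ (alfvenV U) ^ 2 := by
    rw [hS]
    nlinarith [mul_le_mul_of_nonneg_left hperp (sq_nonneg c),
      sq_nonneg (c ^ 2 - sq3 (alfvenV U))]
  have hroot := Real.sq_sqrt hdisc
  have hroot_nonneg := Real.sqrt_nonneg (S ^ 2 - 4 * c ^ 2 * dirDot hd ξ (alfvenV U) ^ 2)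
  rw [Real.sq_sqrt (by positivity)]
  exact ⟨by linear_combination hroot / 4, by linarith⟩

lemma le_of_quadratic_nonpos {S q L x : ℝ} (hL : L ^ 2 = S * L - q) (hS : S ≤ 2 * L)
    (hx : x ^ 2 - S * x + q ≤ 0) : x ≤ L := by
  by_contra! h
  nlinarith [mul_pos (sub_pos.2 h) (show 0 < x + L - S by linarith)]

lemma sq3_smul_sub_smul (a b : ℝ) (x y : Fin 3 → ℝ) :
    sq3 (a • x - b • y) = a ^ 2 * sq3 x - 2 * a * b * dot3 x y + b ^ 2 * sq3 y := by
  simp only [sq3_eq, dot3_eq, Pi.sub_apply, Pi.smul_apply, smul_eq_mul]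
  ring

/- Splitting `w` and the Alfvén velocity into their parts along and across `ξ` leaves a `2 × 2`
form whose larger eigenvalue is `𝒞(U; ξ)²`. -/
lemma sq_add_sq3_le_waveC_sq_mul (pfun : ℝ → ℝ → ℝ) (hξ : unitVec ξ) (hU : 0 < dens U)
    (w : Fin 3 → ℝ) :
    (soundC pfun U * dirDot hd ξ w) ^ 2
        + sq3 (dirDot hd ξ w • alfvenV U - dirDot hd ξ (alfvenV U) • w)
      ≤ waveC pfun hd ξ U ^ 2 * sq3 w := by
  obtain ⟨hroot, hlarger⟩ := waveC_sq_root (hd := hd) pfun hξ hU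
  have hgram := dot3_sub_dirDot_mul_dirDot_sq_le (hd := hd) hξ (alfvenV U) w
  have hw := dirDot_sq_le (hd := hd) hξ w
  have hβ := dirDot_sq_le (hd := hd) hξ (alfvenV U)
  rw [sq3_smul_sub_smul]
  set c := soundC pfun U
  set L := waveC pfun hd ξ U ^ 2
  set a := dirDot hd ξ w
  set b := dirDot hd ξ (alfvenV U)
  set βsq := sq3 (alfvenV U)
  set dev := dot3 (alfvenV U) w - b * a with hdev
  have hnormal : 0 ≤ L - (c ^ 2 + (βsq - b ^ 2)) :=
    sub_nonneg.2 (le_of_quadratic_nonpos hroot hlarger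
      (by nlinarith [mul_nonneg (sq_nonneg b) (sub_nonneg.2 hβ)]))
  have htangent : 0 ≤ L - b ^ 2 :=
    sub_nonneg.2 (le_of_quadratic_nonpos hroot hlarger
      (by nlinarith [mul_nonneg (sq_nonneg b) (sub_nonneg.2 hβ)]))
  have hdet : (L - (c ^ 2 + (βsq - b ^ 2))) * (L - b ^ 2) = b ^ 2 * (βsq - b ^ 2) := by
    linear_combination hroot
  have hcross : 2 * -(b * a * dev)
      ≤ (L - (c ^ 2 + (βsq - b ^ 2))) * a ^ 2 + (L - b ^ 2) * (sq3 w - a ^ 2) := by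
    refine two_mul_le_add_of_sq_le_mul (mul_nonneg hnormal (sq_nonneg a))
      (mul_nonneg htangent (sub_nonneg.2 hw)) ?_
    calc (-(b * a * dev)) ^ 2 = (b * a) ^ 2 * dev ^ 2 := by ring
      _ ≤ (b * a) ^ 2 * ((βsq - b ^ 2) * (sq3 w - a ^ 2)) := by gcongr
      _ = _ := by linear_combination -(a ^ 2 * (sq3 w - a ^ 2)) * hdet
  rw [hdev] at hcross
  linarith

lemma waveForm_eq (hU : U ∈ Gset) (vs Bs : Fin 3 → ℝ) :
    waveForm pfun hd ξ U vs Bs = √(dens U) *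
      (soundC pfun U * dirDot hd ξ (vel U - vs) * √(2 * intE U)
        + dot3 (dirDot hd ξ (vel U - vs) • alfvenV U - dirDot hd ξ (alfvenV U) • (vel U - vs))
          (magB U - Bs)) := by
  have htension : ∀ x y z : Fin 3 → ℝ, ∀ s t : ℝ,
      dot3 (s • x - t • y) z = s * dot3 x z - t * dot3 y z := fun x y z s t => by
    simp only [dot3_eq, Pi.sub_apply, Pi.smul_apply, smul_eq_mul]; ring
  have hscale : dot3 (magB U) (magB U - Bs) = √(dens U) * dot3 (alfvenV U) (magB U - Bs) := by
    generalize magB U - Bs = z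
    rw [magB_eq_smul_alfvenV hU.1]
    exact smul_dotProduct _ _ _
  have hnormal : dirDot hd ξ (magB U) = √(dens U) * dirDot hd ξ (alfvenV U) := by
    rw [← dirDot_smul_right, ← magB_eq_smul_alfvenV hU.1]
  rw [waveForm, pres_eq hU, hscale, hnormal, htension]
  ring

lemma abs_waveForm_le (pfun : ℝ → ℝ → ℝ) (hξ : unitVec ξ) (hU : U ∈ Gset)
    (vs Bs : Fin 3 → ℝ) :
    |waveForm pfun hd ξ U vs Bs| ≤ waveC pfun hd ξ U * thetaSq U vs Bs := by
  have hform := sq_add_sq3_le_waveC_sq_mul (hd := hd) pfun hξ hU.1 (vel U - vs)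
  have hcauchy := mul_add_dot3_sq_le (soundC pfun U * dirDot hd ξ (vel U - vs)) √(2 * intE U)
    (dirDot hd ξ (vel U - vs) • alfvenV U - dirDot hd ξ (alfvenV U) • (vel U - vs)) (magB U - Bs)
  have hrest : 0 ≤ 2 * intE U + sq3 (magB U - Bs) :=
    add_nonneg (mul_nonneg zero_le_two hU.2.le) (sq3_nonneg _)
  rw [Real.sq_sqrt (mul_nonneg zero_le_two hU.2.le)] at hcauchy
  refine abs_le_of_sq_le_sq ?_ (mul_nonneg (waveC_nonneg pfun ξ U) (thetaSq_pos hU vs Bs).le)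
  rw [waveForm_eq hU, mul_pow, Real.sq_sqrt hU.1.le]
  calc _ ≤ dens U * ((waveC pfun hd ξ U ^ 2 * sq3 (vel U - vs))
          * (2 * intE U + sq3 (magB U - Bs))) :=
        mul_le_mul_of_nonneg_left
          (hcauchy.trans (mul_le_mul_of_nonneg_right hform hrest)) hU.1.le
    _ = waveC pfun hd ξ U ^ 2
          * (dens U * sq3 (vel U - vs) * (2 * intE U + sq3 (magB U - Bs))) := by ring
    _ ≤ waveC pfun hd ξ U ^ 2 * thetaSq U vs Bs ^ 2 := by
        refine mul_le_mul_of_nonneg_left ?_ (sq_nonneg _)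
        rw [thetaSq_eq hU, fluidPart, magPart]
        nlinarith [sq_nonneg (dens U * sq3 (vel U - vs) - (2 * intE U + sq3 (magB U - Bs)))]
    _ = _ := (mul_pow _ _ _).symm

end FastSpeed

section DirectionalFlux

variable {pfun : ℝ → ℝ → ℝ} {d : ℕ} {hd : d ≤ 3} {ξ : Fin d → ℝ} {U : MHDState}

lemma dirFlux_neg (pfun : ℝ → ℝ → ℝ) (ξ : Fin d → ℝ) (U : MHDState) :
    dirFlux pfun hd (-ξ) U = -dirFlux pfun hd ξ U := by
  simp only [dirFlux, Pi.neg_apply, neg_smul, Finset.sum_neg_distrib]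

lemma dot8_dirFlux (pfun : ℝ → ℝ → ℝ) (ξ : Fin d → ℝ) (U W : MHDState) :
    dot8 (dirFlux pfun hd ξ U) W = dirDot hd ξ fun i => dot8 (flux pfun i U) W := by
  simp only [dirFlux, dot8_sum, dot8_smul, dirDot]

lemma dens_dirFlux (pfun : ℝ → ℝ → ℝ) (ξ : Fin d → ℝ) (U : MHDState) :
    dens (dirFlux pfun hd ξ U) = dens U * dirDot hd ξ (vel U) := by
  rw [dens_eq_dot8, dot8_dirFlux, ← dirDot_smul_right]
  simp only [← dens_eq_dot8]
  rfl

lemma dot8_dirFlux_nstar (pfun : ℝ → ℝ → ℝ) (ξ : Fin d → ℝ) (hU : dens U ≠ 0)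
    (vs Bs : Fin 3 → ℝ) :
    dot8 (dirFlux pfun hd ξ U) (nstar vs Bs) =
      dirDot hd ξ (vel U) * fluidPart U vs + dirDot hd ξ vs * magPart U Bs
        + waveForm pfun hd ξ U vs Bs + dirDot hd ξ (magB U) * dot3 vs Bs
        - dirDot hd ξ vs * (sq3 Bs / 2) := by
  rw [dot8_dirFlux]
  simp only [dot8_nstar, flux, toten_eq hU, waveForm, fluidPart, magPart, ptot,
    dirDot_eq_dot3, dot3_eq, sq3_eq, Pi.sub_apply]
  simp only [mk, dens, mom, magB, toten, Matrix.cons_val, Fin.reduceEq, if_true, if_false]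
  ring

lemma dot8_dirFlux_nstar_le (pfun : ℝ → ℝ → ℝ) (hξ : unitVec ξ) (hU : U ∈ Gset)
    (vs Bs : Fin 3 → ℝ) :
    dot8 (dirFlux pfun hd ξ U) (nstar vs Bs) ≤
      dirDot hd ξ (vel U) * fluidPart U vs + dirDot hd ξ vs * magPart U Bs
        + waveC pfun hd ξ U * thetaSq U vs Bs + dirDot hd ξ (magB U) * dot3 vs Bs
        - dirDot hd ξ vs * (sq3 Bs / 2) := by
  rw [dot8_dirFlux_nstar pfun ξ hU.1.ne']
  linarith [le_of_abs_le (abs_waveForm_le (hd := hd) pfun hξ hU vs Bs)]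

end DirectionalFlux

section MagneticJump

variable {d : ℕ} {hd : d ≤ 3} {U Ut : MHDState}

lemma dirDot_sub_roeV (hU : U ∈ Gset) (hUt : Ut ∈ Gset) (η : Fin d → ℝ) (vs : Fin 3 → ℝ) :
    dirDot hd η vs - dirDot hd η (roeV U Ut)
      = -((√(dens U) * dirDot hd η (vel U - vs) + √(dens Ut) * dirDot hd η (vel Ut - vs))
        / (√(dens U) + √(dens Ut))) := by
  have hU' := sqrt_dens_pos hU
  have hUt' := sqrt_dens_pos hUt
  simp only [dirDot_eq_dot3, dot3_eq, roeV, Pi.sub_apply]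
  field_simp
  ring

lemma abs_dirDot_sub_roeV_le (hU : U ∈ Gset) (hUt : Ut ∈ Gset) {κ : ℝ} (hκ : 0 ≤ κ)
    {η : Fin d → ℝ} (hη : ∑ k, η k ^ 2 ≤ κ ^ 2) (vs : Fin 3 → ℝ) :
    |dirDot hd η vs - dirDot hd η (roeV U Ut)|
      ≤ κ * (√(dens U) * norm3 (vel U - vs) + √(dens Ut) * norm3 (vel Ut - vs))
        / (√(dens U) + √(dens Ut)) := by
  have hr := sqrt_dens_pos hU
  have hrt := sqrt_dens_pos hUt
  rw [dirDot_sub_roeV hU hUt, abs_neg, abs_div, abs_of_pos (add_pos hr hrt)]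
  gcongr
  calc _ ≤ √(dens U) * |dirDot hd η (vel U - vs)| + √(dens Ut) * |dirDot hd η (vel Ut - vs)| := by
        refine (abs_add_le _ _).trans_eq ?_
        rw [abs_mul, abs_mul, abs_of_pos hr, abs_of_pos hrt]
    _ ≤ √(dens U) * (κ * norm3 (vel U - vs)) + √(dens Ut) * (κ * norm3 (vel Ut - vs)) := by
        gcongr <;> exact abs_dirDot_le hκ hη _
    _ = _ := by ring

lemma abs_magPart_sub_le (U Ut : MHDState) (Bs : Fin 3 → ℝ) :
    |magPart U Bs - magPart Ut Bs|
      ≤ norm3 (magB U - magB Ut) * (norm3 (magB U - Bs) + norm3 (magB Ut - Bs)) / 2 := by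
  have hpolar : magPart U Bs - magPart Ut Bs
      = (dot3 (magB U - magB Ut) (magB U - Bs) + dot3 (magB U - magB Ut) (magB Ut - Bs)) / 2 := by
    simp only [magPart, sq3_eq, dot3_eq, Pi.sub_apply]; ring
  rw [hpolar, abs_div, abs_of_pos (zero_lt_two' ℝ), mul_add]
  gcongr
  exact (abs_add_le _ _).trans (add_le_add (abs_dot3_le _ _) (abs_dot3_le _ _))

lemma sq_add_sq_le_thetaSq (hU : U ∈ Gset) (vs Bs : Fin 3 → ℝ) :
    (√(dens U) * norm3 (vel U - vs)) ^ 2 + norm3 (magB U - Bs) ^ 2 ≤ 2 * thetaSq U vs Bs := by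
  rw [mul_pow, Real.sq_sqrt hU.1.le, norm3_sq, norm3_sq, thetaSq_eq hU, fluidPart, magPart]
  linarith [hU.2]

lemma abs_dirDot_sub_roeV_mul_magPart_sub_le (hU : U ∈ Gset) (hUt : Ut ∈ Gset) {κ : ℝ}
    (hκ : 0 ≤ κ) {η : Fin d → ℝ} (hη : ∑ k, η k ^ 2 ≤ κ ^ 2) (vs Bs : Fin 3 → ℝ) :
    |(dirDot hd η vs - dirDot hd η (roeV U Ut)) * (magPart U Bs - magPart Ut Bs)|
      ≤ κ * jumpB U Ut * (thetaSq U vs Bs + thetaSq Ut vs Bs) := by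
  have hθ := sq_add_sq_le_thetaSq hU vs Bs
  have hθt := sq_add_sq_le_thetaSq hUt vs Bs
  have hvel := abs_dirDot_sub_roeV_le (hd := hd) hU hUt hκ hη vs
  have hmag := abs_magPart_sub_le U Ut Bs
  rw [abs_mul]
  set x := √(dens U) * norm3 (vel U - vs)
  set xt := √(dens Ut) * norm3 (vel Ut - vs)
  set y := norm3 (magB U - Bs)
  set yt := norm3 (magB Ut - Bs)
  have hyoung : (x + xt) * (y + yt) / 2 ≤ thetaSq U vs Bs + thetaSq Ut vs Bs := by
    nlinarith [sq_nonneg (x + xt - (y + yt)), sq_nonneg (x - xt), sq_nonneg (y - yt)]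
  calc _ ≤ κ * (x + xt) / (√(dens U) + √(dens Ut))
        * (norm3 (magB U - magB Ut) * (y + yt) / 2) :=
        mul_le_mul hvel hmag (abs_nonneg _) ((abs_nonneg _).trans hvel)
    _ = κ * jumpB U Ut * ((x + xt) * (y + yt) / 2) := by rw [jumpB]; ring
    _ ≤ _ := mul_le_mul_of_nonneg_left hyoung (mul_nonneg hκ (jumpB_nonneg U Ut))

end MagneticJump

section WaveSpeeds

variable {pfun : ℝ → ℝ → ℝ} {d : ℕ} {hd : d ≤ 3} {ξ : Fin d → ℝ} {U Ut : MHDState}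

lemma alphaL_eq_neg_alphaR (pfun : ℝ → ℝ → ℝ) (ξ : Fin d → ℝ) (U Ut : MHDState) :
    alphaL pfun hd ξ U Ut = -alphaR pfun hd (-ξ) U Ut := by
  rw [alphaL, alphaR, waveC_neg, dirDot_neg_left, dirDot_neg_left, max_neg_neg]
  ring

lemma dirDot_vel_le_alphaR (pfun : ℝ → ℝ → ℝ) (ξ : Fin d → ℝ) (U Ut : MHDState) :
    dirDot hd ξ (vel U) ≤ alphaR pfun hd ξ U Ut :=
  ((le_max_left _ _).trans (le_add_of_nonneg_right (waveC_nonneg pfun ξ U))).trans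
    (le_add_of_nonneg_right (jumpB_nonneg U Ut))

lemma alphaL_le_dirDot_vel (pfun : ℝ → ℝ → ℝ) (ξ : Fin d → ℝ) (U Ut : MHDState) :
    alphaL pfun hd ξ U Ut ≤ dirDot hd ξ (vel U) := by
  have h := dirDot_vel_le_alphaR (hd := hd) pfun (-ξ) U Ut
  rw [dirDot_neg_left] at h
  rw [alphaL_eq_neg_alphaR]
  exact neg_le_of_neg_le h

lemma dirDot_roeV_lt_alphaR (hEOS : IsEOS pfun) (ξ : Fin d → ℝ) (hU : U ∈ Gset)
    (Ut : MHDState) : dirDot hd ξ (roeV U Ut) < alphaR pfun hd ξ U Ut :=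
  ((le_max_right _ _).trans_lt (lt_add_of_pos_right _ (waveC_pos hEOS ξ hU))).trans_le
    (le_add_of_nonneg_right (jumpB_nonneg U Ut))

lemma alphaL_lt_alphaR (hEOS : IsEOS pfun) (ξ : Fin d → ℝ) (hU : U ∈ Gset) (hUt : Ut ∈ Gset) :
    alphaL pfun hd ξ U Ut < alphaR pfun hd ξ Ut U := by
  have hl := dirDot_roeV_lt_alphaR (hd := hd) hEOS (-ξ) hU Ut
  have hr := dirDot_roeV_lt_alphaR (hd := hd) hEOS ξ hUt U
  rw [dirDot_neg_left] at hl
  rw [roeV_comm] at hr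
  rw [alphaL_eq_neg_alphaR]
  linarith

lemma mul_add_mul_le_max_mul {a b p q : ℝ} (hp : 0 ≤ p) (hq : 0 ≤ q) :
    a * p + b * q ≤ max a b * (p + q) := by
  rw [mul_add]
  gcongr
  exacts [le_max_left _ _, le_max_right _ _]

/- What the outgoing wave speed leaves over once it has absorbed the flux: the mismatch between
the Roe velocity and `v*`, and the magnetic jump. -/
lemma le_mul_thetaSq_sub_dot8_dirFlux_nstar (pfun : ℝ → ℝ → ℝ) (hξ : unitVec ξ) (hU : U ∈ Gset)
    {σ : ℝ} (hσ : alphaR pfun hd ξ U Ut ≤ σ) (vs Bs : Fin 3 → ℝ) :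
    (dirDot hd ξ (roeV U Ut) - dirDot hd ξ vs) * magPart U Bs + jumpB U Ut * thetaSq U vs Bs
        - dirDot hd ξ (magB U) * dot3 vs Bs + dirDot hd ξ vs * (sq3 Bs / 2)
      ≤ σ * thetaSq U vs Bs - dot8 (dirFlux pfun hd ξ U) (nstar vs Bs) := by
  have hflux := dot8_dirFlux_nstar_le (hd := hd) pfun hξ hU vs Bs
  have hmax := mul_add_mul_le_max_mul (a := dirDot hd ξ (vel U)) (b := dirDot hd ξ (roeV U Ut))
    (fluidPart_pos hU vs).le (magPart_nonneg U Bs)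
  rw [← thetaSq_eq hU] at hmax
  have hspeed := mul_le_mul_of_nonneg_right hσ (thetaSq_pos hU vs Bs).le
  rw [alphaR, ← jumpB, add_mul, add_mul] at hspeed
  linarith

end WaveSpeeds

section HLL

variable {pfun : ℝ → ℝ → ℝ} {d : ℕ} {hd : d ≤ 3} {ξ : Fin d → ℝ} {Um Up : MHDState}
  {σm σp : ℝ}

lemma neg_dirDot_magB_sub_mul_le (pfun : ℝ → ℝ → ℝ) (hξ : unitVec ξ) (hm : Um ∈ Gset)
    (hp : Up ∈ Gset) (hσm : σm ≤ alphaL pfun hd ξ Um Up) (hσp : alphaR pfun hd ξ Up Um ≤ σp)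
    (vs Bs : Fin 3 → ℝ) :
    -((dirDot hd ξ (magB Up) - dirDot hd ξ (magB Um)) * dot3 vs Bs)
      ≤ (σp * thetaSq Up vs Bs - dot8 (dirFlux pfun hd ξ Up) (nstar vs Bs))
        - (σm * thetaSq Um vs Bs - dot8 (dirFlux pfun hd ξ Um) (nstar vs Bs)) := by
  have hright := le_mul_thetaSq_sub_dot8_dirFlux_nstar pfun hξ hp hσp vs Bs
  have hleft := le_mul_thetaSq_sub_dot8_dirFlux_nstar pfun (unitVec_neg hξ) hm
    (σ := -σm) (Ut := Up) (by rwa [alphaL_eq_neg_alphaR, le_neg] at hσm) vs Bs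
  have hjump := le_of_abs_le (abs_dirDot_sub_roeV_mul_magPart_sub_le (hd := hd) hp hm zero_le_one
    (by rw [show ∑ k, ξ k ^ 2 = 1 from hξ, one_pow]) vs Bs)
  rw [dirFlux_neg, dot8_neg] at hleft
  simp only [dirDot_neg_left, roeV_comm Um Up, jumpB_comm Um Up] at hleft
  linarith

lemma hllFlux_eq (pfun : ℝ → ℝ → ℝ) (ξ : Fin d → ℝ) (Um Up : MHDState) (hσ : σm < σp) :
    hllFlux pfun hd ξ Um Up σm σp
      = dirFlux pfun hd ξ Um + σm • (hllMid pfun hd ξ Um Up σm σp - Um) := by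
  have hne := (sub_pos.2 hσ).ne'
  funext k
  simp only [hllFlux, hllMid, Pi.add_apply, Pi.sub_apply, Pi.smul_apply, smul_eq_mul]
  field_simp
  ring

lemma dirDot_hllMagB (ξ : Fin d → ℝ) (Um Up : MHDState) (hσ : σm < σp) :
    dirDot hd ξ (hllMagB Um Up σm σp) = dirDot hd ξ (magB Um)
      - σm * ((dirDot hd ξ (magB Up) - dirDot hd ξ (magB Um)) / (σp - σm)) := by
  have hne := (sub_pos.2 hσ).ne'
  simp only [dirDot_eq_dot3, dot3_eq, hllMagB]
  field_simp
  ring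

lemma dens_hllMid_nonneg (hm : Um ∈ Gset) (hp : Up ∈ Gset) (hσ : σm < σp)
    (hσm : σm ≤ alphaL pfun hd ξ Um Up) (hσp : alphaR pfun hd ξ Up Um ≤ σp) :
    0 ≤ dens (hllMid pfun hd ξ Um Up σm σp) := by
  have hleft := mul_nonneg hm.1.le (sub_nonneg.2 (hσm.trans (alphaL_le_dirDot_vel pfun ξ Um Up)))
  have hright := mul_nonneg hp.1.le
    (sub_nonneg.2 ((dirDot_vel_le_alphaR pfun ξ Up Um).trans hσp))
  have hval : dens (hllMid pfun hd ξ Um Up σm σp) = (σp - σm)⁻¹ *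
      (dens Up * (σp - dirDot hd ξ (vel Up)) + dens Um * (dirDot hd ξ (vel Um) - σm)) := by
    simp only [dens_eq_dot8, hllMid, dot8_smul, dot8_add, dot8_sub]
    simp only [← dens_eq_dot8, dens_dirFlux]
    ring
  rw [hval]
  exact mul_nonneg (inv_nonneg.2 (sub_pos.2 hσ).le) (add_nonneg hright hleft)

lemma dot8_hllMid_nstar_ge (hξ : unitVec ξ) (hm : Um ∈ Gset) (hp : Up ∈ Gset) (hσ : σm < σp)
    (hσm : σm ≤ alphaL pfun hd ξ Um Up) (hσp : alphaR pfun hd ξ Up Um ≤ σp)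
    (vs Bs : Fin 3 → ℝ) :
    -((dirDot hd ξ (magB Up) - dirDot hd ξ (magB Um)) / (σp - σm) * dot3 vs Bs)
      ≤ dot8 (hllMid pfun hd ξ Um Up σm σp) (nstar vs Bs) + sq3 Bs / 2 := by
  have hpos := sub_pos.2 hσ
  have hval : dot8 (hllMid pfun hd ξ Um Up σm σp) (nstar vs Bs) + sq3 Bs / 2
      = ((σp * thetaSq Up vs Bs - dot8 (dirFlux pfun hd ξ Up) (nstar vs Bs))
        - (σm * thetaSq Um vs Bs - dot8 (dirFlux pfun hd ξ Um) (nstar vs Bs))) / (σp - σm) := by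
    simp only [hllMid, dot8_smul, dot8_add, dot8_sub, ← dot8_nstar_add_eq_thetaSq hm,
      ← dot8_nstar_add_eq_thetaSq hp]
    field_simp
    ring
  rw [hval, div_mul_eq_mul_div, ← neg_div]
  exact div_le_div_of_nonneg_right
    (neg_dirDot_magB_sub_mul_le pfun hξ hm hp hσm hσp vs Bs) hpos.le

lemma dens_hllFlux_le (hm : Um ∈ Gset) (hp : Up ∈ Gset) (hσ : σm < σp) (hσm0 : σm ≤ 0)
    (hσm : σm ≤ alphaL pfun hd ξ Um Up) (hσp : alphaR pfun hd ξ Up Um ≤ σp) :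
    dens (hllFlux pfun hd ξ Um Up σm σp) ≤ dens Um * (dirDot hd ξ (vel Um) - σm) := by
  have hmid := mul_nonpos_of_nonpos_of_nonneg hσm0 (dens_hllMid_nonneg hm hp hσ hσm hσp)
  rw [hllFlux_eq pfun ξ Um Up hσ, dens_eq_dot8, dot8_add, dot8_smul, dot8_sub]
  simp only [← dens_eq_dot8, dens_dirFlux]
  linarith

lemma dot8_hllFlux_nstar_le (hξ : unitVec ξ) (hm : Um ∈ Gset) (hp : Up ∈ Gset) (hσ : σm < σp)
    (hσm0 : σm ≤ 0) (hσm : σm ≤ alphaL pfun hd ξ Um Up) (hσp : alphaR pfun hd ξ Up Um ≤ σp)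
    (vs Bs : Fin 3 → ℝ) :
    dot8 (hllFlux pfun hd ξ Um Up σm σp) (nstar vs Bs)
      ≤ dot8 (dirFlux pfun hd ξ Um) (nstar vs Bs) - σm * thetaSq Um vs Bs
        + (dirDot hd ξ (hllMagB Um Up σm σp) - dirDot hd ξ (magB Um)) * dot3 vs Bs := by
  have hmid := mul_le_mul_of_nonpos_left (dot8_hllMid_nstar_ge hξ hm hp hσ hσm hσp vs Bs) hσm0
  rw [hllFlux_eq pfun ξ Um Up hσ, dirDot_hllMagB ξ Um Up hσ, ← dot8_nstar_add_eq_thetaSq hm,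
    dot8_add, dot8_smul, dot8_sub]
  linarith

end HLL

section ClosedBoundary

lemma sum_sum_nonpos_of_add_swap_nonpos {ι : Type*} [Fintype ι] {f : ι → ι → ℝ}
    (h : ∀ j i, f j i + f i j ≤ 0) : ∑ j, ∑ i, f j i ≤ 0 := by
  have hswap : 2 * ∑ j, ∑ i, f j i = ∑ j, ∑ i, (f j i + f i j) := by
    simp only [Finset.sum_add_distrib]
    rw [two_mul, Finset.sum_comm (f := fun j i => f i j)]
  linarith [Finset.sum_nonpos fun j (_ : j ∈ Finset.univ) =>
    Finset.sum_nonpos fun i (_ : i ∈ Finset.univ) => h j i]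

/- Since `g` has mean zero, `g j` may be replaced by the differences `g j - g i`, averaged over
`i`; exchanging `j` and `i` then pairs these differences with those of `m`. -/
lemma sum_mul_le_of_mean_eq_zero {ι : Type*} [Fintype ι] {s g m t : ι → ℝ} {G D : ι → ι → ℝ}
    (hs : ∀ j, 0 ≤ s j) (hS : 0 < ∑ j, s j) (hg : ∑ j, s j * g j = 0)
    (hG : ∀ j i, G j i = -G i j) (hD : ∀ j i, D j i = D i j)
    (hpair : ∀ j i, (g j - g i - G j i) * (m j - m i) ≤ 2 * D j i * (t j + t i)) :
    ∑ j, s j * (g j * m j) ≤ ∑ j, s j * (((∑ i, s i)⁻¹ * ∑ i, s i * G j i) * m j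
      + (2 * (∑ i, s i)⁻¹ * ∑ i, s i * D j i) * t j) := by
  have hrow : ∀ j, ∑ i, s j * s i * ((g j - g i - G j i) * m j - 2 * D j i * t j)
      = (∑ i, s i) * (s j * (g j * m j) - s j * (((∑ i, s i)⁻¹ * ∑ i, s i * G j i) * m j
        + (2 * (∑ i, s i)⁻¹ * ∑ i, s i * D j i) * t j)) := by
    intro j
    calc _ = s j * g j * m j * ∑ i, s i - s j * m j * ∑ i, s i * g i
          - s j * m j * ∑ i, s i * G j i - 2 * s j * t j * ∑ i, s i * D j i := by
          simp only [Finset.mul_sum, ← Finset.sum_sub_distrib]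
          exact Finset.sum_congr rfl fun i _ => by ring
      _ = _ := by
          rw [hg]; field_simp; ring
  have hsym : ∑ j, ∑ i, s j * s i * ((g j - g i - G j i) * m j - 2 * D j i * t j) ≤ 0 :=
    sum_sum_nonpos_of_add_swap_nonpos fun j i => by
      rw [hG i j, hD i j]
      linarith [mul_le_mul_of_nonneg_left (hpair j i) (mul_nonneg (hs j) (hs i))]
  simp only [hrow, ← Finset.mul_sum, Finset.sum_sub_distrib] at hsym
  exact sub_nonpos.1 (nonpos_of_mul_nonpos_right hsym hS)

variable {pfun : ℝ → ℝ → ℝ} {d : ℕ} {hd : d ≤ 3} {N : ℕ} {len : Fin N → ℝ}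
  {ξ : Fin N → Fin d → ℝ} {U : Fin N → MHDState}

lemma sum_mul_dirDot_mul_magPart_le (hlen : ∀ j, 0 ≤ len j) (hper : 0 < ∑ j, len j)
    (hξ : ∀ j, unitVec (ξ j)) (hGreen : ∑ j, len j • ξ j = 0) (hU : ∀ j, U j ∈ Gset)
    (vs Bs : Fin 3 → ℝ) :
    ∑ j, len j * (dirDot hd (ξ j) vs * magPart (U j) Bs)
      ≤ ∑ j, len j * (((∑ i, len i)⁻¹
            * ∑ i, len i * dirDot hd (ξ j - ξ i) (roeV (U j) (U i))) * magPart (U j) Bs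
          + (2 * (∑ i, len i)⁻¹ * ∑ i, len i * jumpB (U j) (U i)) * thetaSq (U j) vs Bs) := by
  refine sum_mul_le_of_mean_eq_zero hlen hper (sum_mul_dirDot_eq_zero hGreen vs)
    (fun j i => ?_) (fun j i => jumpB_comm _ _) (fun j i => ?_)
  · rw [roeV_comm (U j), ← neg_sub (ξ i), dirDot_neg_left]
  · rw [← dirDot_sub_left]
    exact le_of_abs_le (abs_dirDot_sub_roeV_mul_magPart_sub_le (hU j) (hU i) zero_le_two
      (sum_sub_sq_le_of_unitVec (hξ j) (hξ i)) vs Bs)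

lemma dirDot_vel_le_alphaHat (pfun : ℝ → ℝ → ℝ) (hlen : ∀ j, 0 ≤ len j)
    (ξ : Fin N → Fin d → ℝ) (U : Fin N → MHDState) (j : Fin N) :
    dirDot hd (ξ j) (vel (U j)) ≤ alphaHat pfun hd len ξ U j := by
  have hjump : 0 ≤ 2 * (∑ i, len i)⁻¹ * ∑ i, len i * jumpB (U j) (U i) :=
    mul_nonneg (mul_nonneg zero_le_two (inv_nonneg.2 (Finset.sum_nonneg fun i _ => hlen i)))
      (Finset.sum_nonneg fun i _ => mul_nonneg (hlen i) (jumpB_nonneg _ _))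
  exact ((le_max_left _ _).trans (le_add_of_nonneg_right (waveC_nonneg pfun _ _))).trans
    (le_add_of_nonneg_right hjump)

lemma le_alphaHat_mul_thetaSq (pfun : ℝ → ℝ → ℝ) (len : Fin N → ℝ) (ξ : Fin N → Fin d → ℝ)
    {j : Fin N} (hU : U j ∈ Gset) (vs Bs : Fin 3 → ℝ) :
    dirDot hd (ξ j) (vel (U j)) * fluidPart (U j) vs
        + waveC pfun hd (ξ j) (U j) * thetaSq (U j) vs Bs
        + (((∑ i, len i)⁻¹
            * ∑ i, len i * dirDot hd (ξ j - ξ i) (roeV (U j) (U i))) * magPart (U j) Bs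
          + (2 * (∑ i, len i)⁻¹ * ∑ i, len i * jumpB (U j) (U i)) * thetaSq (U j) vs Bs)
      ≤ alphaHat pfun hd len ξ U j * thetaSq (U j) vs Bs := by
  have hmax := mul_add_mul_le_max_mul (a := dirDot hd (ξ j) (vel (U j)))
    (b := (∑ i, len i)⁻¹ * ∑ i, len i * dirDot hd (ξ j - ξ i) (roeV (U j) (U i)))
    (fluidPart_pos hU vs).le (magPart_nonneg (U j) Bs)
  rw [← thetaSq_eq hU] at hmax
  have hsplit : alphaHat pfun hd len ξ U j = max (dirDot hd (ξ j) (vel (U j)))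
      ((∑ i, len i)⁻¹ * ∑ i, len i * dirDot hd (ξ j - ξ i) (roeV (U j) (U i)))
        + waveC pfun hd (ξ j) (U j)
        + 2 * (∑ i, len i)⁻¹ * ∑ i, len i * jumpB (U j) (U i) := rfl
  rw [hsplit, add_mul, add_mul]
  linarith

lemma sum_dot8_dirFlux_nstar_le (pfun : ℝ → ℝ → ℝ) (hlen : ∀ j, 0 ≤ len j)
    (hper : 0 < ∑ j, len j) (hξ : ∀ j, unitVec (ξ j)) (hGreen : ∑ j, len j • ξ j = 0)
    (hU : ∀ j, U j ∈ Gset) (vs Bs : Fin 3 → ℝ) :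
    ∑ j, len j * dot8 (dirFlux pfun hd (ξ j) (U j)) (nstar vs Bs)
      ≤ ∑ j, len j * (alphaHat pfun hd len ξ U j * thetaSq (U j) vs Bs
          + dirDot hd (ξ j) (magB (U j)) * dot3 vs Bs) := by
  have hsym := sum_mul_dirDot_mul_magPart_le (hd := hd) hlen hper hξ hGreen hU vs Bs
  have hclosed : ∑ j, len j * dirDot hd (ξ j) vs * (sq3 Bs / 2) = 0 := by
    rw [← Finset.sum_mul, sum_mul_dirDot_eq_zero hGreen, zero_mul]
  have hedge := Finset.sum_le_sum fun j (_ : j ∈ Finset.univ) => mul_le_mul_of_nonneg_left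
    (add_le_add (dot8_dirFlux_nstar_le (hd := hd) pfun (hξ j) (hU j) vs Bs)
      (le_alphaHat_mul_thetaSq (hd := hd) pfun len ξ (hU j) vs Bs)) (hlen j)
  simp only [mul_add, mul_sub, Finset.sum_add_distrib, Finset.sum_sub_distrib, mul_assoc]
    at hsym hclosed hedge ⊢
  linarith

lemma sum_dens_hllFlux_le (hlen : ∀ j, 0 ≤ len j)
    {Um Up : Fin N → MHDState} (hm : ∀ j, Um j ∈ Gset) (hp : ∀ j, Up j ∈ Gset)
    {σm σp : Fin N → ℝ} (hσ : ∀ j, σm j < σp j) (hσm0 : ∀ j, σm j ≤ 0)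
    (hσm : ∀ j, σm j ≤ alphaL pfun hd (ξ j) (Um j) (Up j))
    (hσp : ∀ j, alphaR pfun hd (ξ j) (Up j) (Um j) ≤ σp j) :
    ∑ j, len j * dens (hllFlux pfun hd (ξ j) (Um j) (Up j) (σm j) (σp j))
      ≤ ∑ j, len j * ((alphaHat pfun hd len ξ Um j - σm j) * dens (Um j)) :=
  Finset.sum_le_sum fun j _ => mul_le_mul_of_nonneg_left
    ((dens_hllFlux_le (hm j) (hp j) (hσ j) (hσm0 j) (hσm j) (hσp j)).trans
      ((mul_comm _ _).trans_le (mul_le_mul_of_nonneg_right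
        (sub_le_sub_right (dirDot_vel_le_alphaHat pfun hlen ξ Um j) _) (hm j).1.le))) (hlen j)

lemma sum_dot8_hllFlux_nstar_le (hlen : ∀ j, 0 ≤ len j)
    (hper : 0 < ∑ j, len j) (hξ : ∀ j, unitVec (ξ j)) (hGreen : ∑ j, len j • ξ j = 0)
    {Um Up : Fin N → MHDState} (hm : ∀ j, Um j ∈ Gset) (hp : ∀ j, Up j ∈ Gset)
    {σm σp : Fin N → ℝ} (hσ : ∀ j, σm j < σp j) (hσm0 : ∀ j, σm j ≤ 0)
    (hσm : ∀ j, σm j ≤ alphaL pfun hd (ξ j) (Um j) (Up j))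
    (hσp : ∀ j, alphaR pfun hd (ξ j) (Up j) (Um j) ≤ σp j) (vs Bs : Fin 3 → ℝ) :
    ∑ j, len j * dot8 (hllFlux pfun hd (ξ j) (Um j) (Up j) (σm j) (σp j)) (nstar vs Bs)
      ≤ (∑ j, len j * ((alphaHat pfun hd len ξ Um j - σm j) * thetaSq (Um j) vs Bs))
        + (∑ j, len j * dirDot hd (ξ j) (hllMagB (Um j) (Up j) (σm j) (σp j)))
          * dot3 vs Bs := by
  have hflux := sum_dot8_dirFlux_nstar_le (hd := hd) pfun hlen hper hξ hGreen hm vs Bs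
  have hedge := Finset.sum_le_sum fun j (_ : j ∈ Finset.univ) => mul_le_mul_of_nonneg_left
    (dot8_hllFlux_nstar_le (hξ j) (hm j) (hp j) (hσ j) (hσm0 j) (hσm j) (hσp j) vs Bs) (hlen j)
  simp only [mul_add, mul_sub, sub_mul, Finset.sum_add_distrib, Finset.sum_sub_distrib,
    Finset.sum_mul, mul_assoc] at hflux hedge ⊢
  linarith

end ClosedBoundary

section CellUpdate

/- The affine functional `U ↦ U · W + c` commutes with the convex combination; the Courant
condition lets the weight of every edge node absorb the flux through it. -/
lemma neg_lt_dot8_update {κ ι ι' : Type*} [Fintype κ] [Nonempty κ] [Fintype ι] [Nonempty ι]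
    [Fintype ι'] {W : MHDState} {c τ : ℝ} {wt : ι' → ℝ} {Ut : ι' → MHDState}
    {wb s : κ → ι → ℝ} {Ub F : κ → ι → MHDState} {len : κ → ℝ} {ω g : ι → ℝ}
    (hwt : ∀ q, 0 ≤ wt q) (hwsum : ∑ q, wt q + ∑ j, ∑ q, wb j q = 1)
    (hτ : 0 ≤ τ) (hω : ∀ q, 0 ≤ ω q)
    (hUt : ∀ q, 0 ≤ dot8 (Ut q) W + c) (hUb : ∀ j q, 0 < dot8 (Ub j q) W + c)
    (hF : ∀ q, ∑ j, len j * dot8 (F j q) W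
      ≤ ∑ j, len j * (s j q * (dot8 (Ub j q) W + c)) + g q)
    (hCFL : ∀ j q, τ * (len j * ω q * s j q) < wb j q) :
    -(τ * ∑ q, ω q * g q)
      < dot8 (∑ q, wt q • Ut q + ∑ j, ∑ q, wb j q • Ub j q
          - τ • ∑ j, ∑ q, (len j * ω q) • F j q) W + c := by
  have haffine : dot8 (∑ q, wt q • Ut q + ∑ j, ∑ q, wb j q • Ub j q
        - τ • ∑ j, ∑ q, (len j * ω q) • F j q) W + c
      = ∑ q, wt q * (dot8 (Ut q) W + c) + ∑ j, ∑ q, wb j q * (dot8 (Ub j q) W + c)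
        - τ * ∑ j, ∑ q, len j * ω q * dot8 (F j q) W := by
    simp only [dot8_sub, dot8_add, dot8_smul, dot8_sum, mul_add, Finset.sum_add_distrib,
      ← Finset.sum_mul]
    linear_combination -c * hwsum
  have hinterior : 0 ≤ ∑ q, wt q * (dot8 (Ut q) W + c) :=
    Finset.sum_nonneg fun q _ => mul_nonneg (hwt q) (hUt q)
  have hflux : ∑ j, ∑ q, len j * ω q * dot8 (F j q) W
      ≤ ∑ j, ∑ q, len j * ω q * s j q * (dot8 (Ub j q) W + c) + ∑ q, ω q * g q := by
    rw [Finset.sum_comm, Finset.sum_comm (f := fun j q => _ * s j q * _),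
      ← Finset.sum_add_distrib]
    refine Finset.sum_le_sum fun q _ => ?_
    have h := mul_le_mul_of_nonneg_left (hF q) (hω q)
    rw [mul_add, Finset.mul_sum, Finset.mul_sum] at h
    calc _ = ∑ j, ω q * (len j * dot8 (F j q) W) := Finset.sum_congr rfl fun j _ => by ring
      _ ≤ _ := h
      _ = _ := congrArg (· + ω q * g q) (Finset.sum_congr rfl fun j _ => by ring)
  have hedges : τ * ∑ j, ∑ q, len j * ω q * s j q * (dot8 (Ub j q) W + c)
      < ∑ j, ∑ q, wb j q * (dot8 (Ub j q) W + c) := by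
    simp only [Finset.mul_sum, ← mul_assoc τ]
    exact Finset.sum_lt_sum_of_nonempty Finset.univ_nonempty fun j _ =>
      Finset.sum_lt_sum_of_nonempty Finset.univ_nonempty fun q _ =>
        mul_lt_mul_of_pos_right (by simpa only [mul_assoc] using hCFL j q) (hUb j q)
  rw [haffine]
  linarith [mul_le_mul_of_nonneg_left hflux hτ]

variable {pfun : ℝ → ℝ → ℝ} {d : ℕ} {hd : d ≤ 3} {N : ℕ} [NeZero N] {ι ι' : Type*} [Fintype ι]
  [Nonempty ι] [Fintype ι'] {len : Fin N → ℝ} {ξ : Fin N → Fin d → ℝ} {ω : ι → ℝ}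
  {Uint Uext : Fin N → ι → MHDState} {Ut : ι' → MHDState} {wt : ι' → ℝ} {wb : Fin N → ι → ℝ}
  {σm σp : Fin N → ι → ℝ} {τ : ℝ}

lemma dens_update_pos (hlen : ∀ j, 0 ≤ len j) (hω : ∀ q, 0 ≤ ω q)
    (hUint : ∀ j q, Uint j q ∈ Gset) (hUext : ∀ j q, Uext j q ∈ Gset) (hUt : ∀ q, Ut q ∈ Gset)
    (hwt : ∀ q, 0 ≤ wt q) (hwsum : ∑ q, wt q + ∑ j, ∑ q, wb j q = 1)
    (hσ : ∀ j q, σm j q < σp j q) (hσm0 : ∀ j q, σm j q ≤ 0)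
    (hσm : ∀ j q, σm j q ≤ alphaL pfun hd (ξ j) (Uint j q) (Uext j q))
    (hσp : ∀ j q, alphaR pfun hd (ξ j) (Uext j q) (Uint j q) ≤ σp j q) (hτ : 0 ≤ τ)
    (hCFL : ∀ j q, τ * (len j * ω q
      * (alphaHat pfun hd len ξ (fun i => Uint i q) j - σm j q)) < wb j q) :
    0 < dens (∑ q, wt q • Ut q + ∑ j, ∑ q, wb j q • Uint j q
      - τ • ∑ j, ∑ q, (len j * ω q) •
        hllFlux pfun hd (ξ j) (Uint j q) (Uext j q) (σm j q) (σp j q)) := by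
  have hflux := fun q => sum_dens_hllFlux_le (ξ := ξ) hlen (fun j => hUint j q)
    (fun j => hUext j q) (fun j => hσ j q) (fun j => hσm0 j q) (fun j => hσm j q)
    fun j => hσp j q
  have h := neg_lt_dot8_update (W := Pi.single 0 1) (c := 0) (g := 0) (Ut := Ut) (Ub := Uint)
    hwt hwsum hτ hω (fun q => by simpa only [← dens_eq_dot8, add_zero] using (hUt q).1.le)
    (fun j q => by simpa only [← dens_eq_dot8, add_zero] using (hUint j q).1)
    (fun q => by simpa only [← dens_eq_dot8, add_zero, Pi.zero_apply] using hflux q) hCFL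
  simpa only [← dens_eq_dot8, add_zero, Pi.zero_apply, mul_zero, Finset.sum_const_zero,
    neg_zero] using h

lemma neg_lt_dot8_nstar_update (hlen : ∀ j, 0 ≤ len j) (hper : 0 < ∑ j, len j)
    (hξ : ∀ j, unitVec (ξ j)) (hGreen : ∑ j, len j • ξ j = 0) (hω : ∀ q, 0 ≤ ω q)
    (hUint : ∀ j q, Uint j q ∈ Gset) (hUext : ∀ j q, Uext j q ∈ Gset) (hUt : ∀ q, Ut q ∈ Gset)
    (hwt : ∀ q, 0 ≤ wt q) (hwsum : ∑ q, wt q + ∑ j, ∑ q, wb j q = 1)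
    (hσ : ∀ j q, σm j q < σp j q) (hσm0 : ∀ j q, σm j q ≤ 0)
    (hσm : ∀ j q, σm j q ≤ alphaL pfun hd (ξ j) (Uint j q) (Uext j q))
    (hσp : ∀ j q, alphaR pfun hd (ξ j) (Uext j q) (Uint j q) ≤ σp j q) (hτ : 0 ≤ τ)
    (hCFL : ∀ j q, τ * (len j * ω q
      * (alphaHat pfun hd len ξ (fun i => Uint i q) j - σm j q)) < wb j q)
    (vs Bs : Fin 3 → ℝ) :
    -(τ * (∑ j, ∑ q, len j * ω q
        * dirDot hd (ξ j) (hllMagB (Uint j q) (Uext j q) (σm j q) (σp j q))) * dot3 vs Bs)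
      < dot8 (∑ q, wt q • Ut q + ∑ j, ∑ q, wb j q • Uint j q
          - τ • ∑ j, ∑ q, (len j * ω q) •
            hllFlux pfun hd (ξ j) (Uint j q) (Uext j q) (σm j q) (σp j q)) (nstar vs Bs)
        + sq3 Bs / 2 := by
  have hflux := fun q => sum_dot8_hllFlux_nstar_le (ξ := ξ) hlen hper hξ hGreen
    (fun j => hUint j q) (fun j => hUext j q) (fun j => hσ j q) (fun j => hσm0 j q)
    (fun j => hσm j q) (fun j => hσp j q) vs Bs
  have h := neg_lt_dot8_update (W := nstar vs Bs) (c := sq3 Bs / 2) (Ut := Ut) (Ub := Uint)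
    hwt hwsum hτ hω
    (fun q => (dot8_nstar_add_eq_thetaSq (hUt q) vs Bs).symm ▸ (thetaSq_pos (hUt q) vs Bs).le)
    (fun j q => (dot8_nstar_add_eq_thetaSq (hUint j q) vs Bs).symm ▸
      thetaSq_pos (hUint j q) vs Bs)
    (fun q => by simpa only [dot8_nstar_add_eq_thetaSq (hUint _ q)] using hflux q) hCFL
  refine lt_of_eq_of_lt (congrArg Neg.neg ?_) h
  rw [Finset.sum_comm, mul_assoc, Finset.sum_mul]
  simp only [Finset.sum_mul, Finset.mul_sum]
  exact Finset.sum_congr rfl fun q _ => Finset.sum_congr rfl fun j _ => by ring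

end CellUpdate

theorem twoD_high_order_conservative_weak_positivity_general
    {pfun : ℝ → ℝ → ℝ} (hEOS : IsEOS pfun) {d : ℕ} (hd : d ≤ 3)
    {N : ℕ} [NeZero N] {ι ι' : Type*} [Fintype ι] [Nonempty ι] [Fintype ι']
    {areaK : ℝ} (hK : 0 < areaK) {len : Fin N → ℝ} (hlen : ∀ j, 0 < len j)
    {ξ : Fin N → Fin d → ℝ} (hξ : ∀ j, unitVec (ξ j)) (hGreen : ∑ j, len j • ξ j = 0)
    {ω : ι → ℝ} (hω : ∀ q, 0 < ω q) {Uint Uext : Fin N → ι → MHDState}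
    (hUint : ∀ j q, Uint j q ∈ Gset) (hUext : ∀ j q, Uext j q ∈ Gset)
    {Ut : ι' → MHDState} (hUt : ∀ q, Ut q ∈ Gset) {wt : ι' → ℝ} (hwt : ∀ q, 0 ≤ wt q)
    {wb : Fin N → ι → ℝ} (hwsum : ∑ q, wt q + ∑ j, ∑ q, wb j q = 1)
    {Ubar : MHDState} (hUbar : Ubar = ∑ q, wt q • Ut q + ∑ j, ∑ q, wb j q • Uint j q)
    {σm σp : Fin N → ι → ℝ} (hσm0 : ∀ j q, σm j q ≤ 0)
    (hσm : ∀ j q, σm j q ≤ alphaL pfun hd (ξ j) (Uint j q) (Uext j q))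
    (hσp : ∀ j q, alphaR pfun hd (ξ j) (Uext j q) (Uint j q) ≤ σp j q)
    {Δt : ℝ} (hΔt : 0 ≤ Δt)
    (hCFL : ∀ j q, Δt * (len j / areaK)
      * (alphaHat pfun hd len ξ (fun i => Uint i q) j - σm j q) < wb j q / ω q)
    {div : ℝ} (hdiv : div = areaK⁻¹ * ∑ j, ∑ q, len j * ω q
      * dirDot hd (ξ j) (hllMagB (Uint j q) (Uext j q) (σm j q) (σp j q)))
    {Ubar' : MHDState} (hUbar' : Ubar' = Ubar - (Δt / areaK) • ∑ j, ∑ q, (len j * ω q) •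
      hllFlux pfun hd (ξ j) (Uint j q) (Uext j q) (σm j q) (σp j q)) :
    0 < dens Ubar' ∧
      intE Ubar' > -(Δt * (dens Ubar')⁻¹ * dot3 (mom Ubar') (magB Ubar') * div) ∧
      (div = 0 → Ubar' ∈ Gset) := by
  have hσ : ∀ j q, σm j q < σp j q := fun j q => (hσm j q).trans_lt
    ((alphaL_lt_alphaR hEOS (ξ j) (hUint j q) (hUext j q)).trans_le (hσp j q))
  have hper : 0 < ∑ j, len j := Finset.sum_pos (fun j _ => hlen j) Finset.univ_nonempty
  have hτ : 0 ≤ Δt / areaK := div_nonneg hΔt hK.le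
  have hCourant : ∀ j q, Δt / areaK
      * (len j * ω q * (alphaHat pfun hd len ξ (fun i => Uint i q) j - σm j q)) < wb j q :=
    fun j q => lt_of_eq_of_lt (by ring) ((lt_div_iff₀ (hω q)).1 (hCFL j q))
  have hdens : 0 < dens Ubar' := by
    rw [hUbar', hUbar]
    exact dens_update_pos (fun j => (hlen j).le) (fun q => (hω q).le) hUint hUext hUt hwt hwsum
      hσ hσm0 hσm hσp hτ hCourant
  have henergy : -(Δt * (dens Ubar')⁻¹ * dot3 (mom Ubar') (magB Ubar') * div) < intE Ubar' := by
    have h := neg_lt_dot8_nstar_update (fun j => (hlen j).le) hper hξ hGreen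
      (fun q => (hω q).le) hUint hUext hUt hwt hwsum hσ hσm0 hσm hσp hτ hCourant
      (vel Ubar') (magB Ubar')
    rw [← hUbar, ← hUbar', dot8_nstar_vel_magB_add hdens.ne', dot3_vel] at h
    refine lt_of_eq_of_lt ?_ h
    rw [hdiv]
    ring
  exact ⟨hdens, henergy, fun h0 => ⟨hdens, by simpa [h0] using henergy⟩⟩

/-- Theorem 4.4: weak positivity of the high-order conservative 2D scheme
(one cell, one forward-Euler step). -/
theorem twoD_high_order_conservative_weak_positivity
    (pfun : ℝ → ℝ → ℝ) (hEOS : IsEOS pfun)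
    {N : ℕ} (hN : 1 ≤ N) {Q : ℕ} (hQ : 1 ≤ Q) {Qt : ℕ}
    (areaK : ℝ) (hK : 0 < areaK)
    (len : Fin N → ℝ) (hlen : ∀ j, 0 < len j)
    (ξ : Fin N → Fin 2 → ℝ) (hξ : ∀ j, unitVec (ξ j))
    (hGreen : (∑ j, len j • ξ j) = 0)
    (ω : Fin Q → ℝ) (hω : ∀ q, 0 < ω q) (hωsum : (∑ q, ω q) = 1)
    (Uint Uext : Fin N → Fin Q → MHDState)
    (hUint : ∀ j q, Uint j q ∈ Gset) (hUext : ∀ j q, Uext j q ∈ Gset)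
    (Ut : Fin Qt → MHDState) (hUt : ∀ q, Ut q ∈ Gset)
    (wt : Fin Qt → ℝ) (hwt : ∀ q, 0 < wt q)
    (wb : Fin N → Fin Q → ℝ) (hwb : ∀ j q, 0 < wb j q)
    (hwsum : (∑ q, wt q) + (∑ j, ∑ q, wb j q) = 1)
    (Ubar : MHDState)
    (hUbar : Ubar = (∑ q, wt q • Ut q) + ∑ j, ∑ q, wb j q • Uint j q)
    (σr σl : Fin N → Fin Q → ℝ)
    (hr : ∀ j q, alphaR pfun d2le3 (ξ j) (Uext j q) (Uint j q) ≤ σr j q)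
    (hl : ∀ j q, σl j q ≤ alphaL pfun d2le3 (ξ j) (Uint j q) (Uext j q))
    (Δt : ℝ) (hΔt : 0 < Δt)
    (hCFL : ∀ j q, Δt * (len j / areaK) *
        (alphaHat pfun d2le3 len ξ (fun i => Uint i q) j - min (σl j q) 0)
        < wb j q / ω q)
    (div : ℝ)
    (hdiv : div = areaK⁻¹ *
      ∑ j, ∑ q, len j * ω q * dirDot d2le3 (ξ j)
        (fun k => (max (σr j q) 0 * magB (Uint j q) k
            - min (σl j q) 0 * magB (Uext j q) k)
          / (max (σr j q) 0 - min (σl j q) 0)))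
    (Ubar' : MHDState)
    (hUbar' : Ubar' = Ubar - (Δt / areaK) •
      (∑ j, ∑ q, (len j * ω q) •
        hllFlux pfun d2le3 (ξ j) (Uint j q) (Uext j q)
          (min (σl j q) 0) (max (σr j q) 0))) :
    0 < dens Ubar' ∧
      intE Ubar' > -(Δt * (dens Ubar')⁻¹ * dot3 (mom Ubar') (magB Ubar') * div) ∧
      (div = 0 → Ubar' ∈ Gset) := by
  have : NeZero N := ⟨by omega⟩
  have : Nonempty (Fin Q) := ⟨⟨0, hQ⟩⟩
  exact twoD_high_order_conservative_weak_positivity_general hEOS d2le3 hK hlen hξ hGreen hω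
    hUint hUext hUt (fun q => (hwt q).le) hwsum hUbar (fun j q => min_le_right _ _)
    (fun j q => min_le_of_left_le (hl j q)) (fun j q => le_max_of_le_left (hr j q)) hΔt.le hCFL
    hdiv hUbar'

end MHD
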